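/- Let μ ∈ ℝ, μ ≠ 0, let A₀, A₁, A₂, A₃, A₄ ∈ ℝ, and let h : ℝ → ℝ be smooth with h'(x) ≠ 0 for all x, satisfying for all x ∈ ℝ the hyperbolic second-order equation ((A₀h − A₁)h'³ + A₃cosh(μx) + (A₄/μ)sinh(μx))·h'' + A₀h'⁵ + (−(μ²/2)A₀h² + μ²A₁h + A₂)·h'³ − μ(A₃sinh(μx) + (A₄/μ)cosh(μx))·h' = 0. Define a₀ = −(A₀/μ)h'⁴, a₁ = (A₁ − A₀h)h'³, a₂ = ((1/2)μA₀h² − (2A₀/μ)h'² − μA₁h − A₂/μ)h'², a₃ = (A₁ − A₀h)h'³ − (A₃cosh(μx) + (A₄/μ)sinh(μx)), a₄ = ((μ/2)(A₀h − 2A₁)h − (A₀/μ)h'² − A₂/μ)h'² + (A₃sinh(μx) + (A₄/μ)cosh(μx)). Then for every C_e, φ₀ ∈ ℝ the function F = C_e·cos(μy + φ₀)·(a₀(x)p_x⁴ + a₂(x)p_x²p_y² + a₄(x)p_y⁴) + C_e·sin(μy + φ₀)·(a₁(x)p_x³p_y + a₃(x)p_xp_y³) satisfies {F, H} = 0 identically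 on ℝ⁴, where H = (1/2)h'(x)²(p_x²+p_y²). -/

import Mathlib

/-- Canonical Poisson bracket on ℝ⁴ with coordinates (x, y, pₓ, p_y). -/
noncomputable def pb (F G : ℝ → ℝ → ℝ → ℝ → ℝ) (x y px py : ℝ) : ℝ :=
    deriv (fun t => F x y t py) px * deriv (fun t => G t y px py) x
  - deriv (fun t => F t y px py) x * deriv (fun t => G x y t py) px
  + deriv (fun t => F x y px t) py * deriv (fun t => G x t px py) y
  - deriv (fun t => F x t px py) y * deriv (fun t => G x y px t) py

/-- Coefficients of the quartic integral in the hyperbolic case. -/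
noncomputable def hypA0 (μ A0 : ℝ) (h : ℝ → ℝ) (x : ℝ) : ℝ := -(A0 / μ) * (deriv h x)^4

noncomputable def hypA1 (A0 A1 : ℝ) (h : ℝ → ℝ) (x : ℝ) : ℝ :=
  (A1 - A0 * h x) * (deriv h x)^3

noncomputable def hypA2 (μ A0 A1 A2 : ℝ) (h : ℝ → ℝ) (x : ℝ) : ℝ :=
  ((1/2) * μ * A0 * (h x)^2 - 2 * A0 / μ * (deriv h x)^2 - μ * A1 * h x - A2 / μ)
    * (deriv h x)^2

noncomputable def hypA3 (μ A0 A1 A3 A4 : ℝ) (h : ℝ → ℝ) (x : ℝ) : ℝ :=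
  (A1 - A0 * h x) * (deriv h x)^3
    - (A3 * Real.cosh (μ * x) + A4 / μ * Real.sinh (μ * x))

noncomputable def hypA4 (μ A0 A1 A2 A3 A4 : ℝ) (h : ℝ → ℝ) (x : ℝ) : ℝ :=
  (μ / 2 * (A0 * h x - 2 * A1) * h x - A0 / μ * (deriv h x)^2 - A2 / μ)
      * (deriv h x)^2
    + (A3 * Real.sinh (μ * x) + A4 / μ * Real.cosh (μ * x))

/-!
Put `P = A₃ cosh (μx) + (A₄/μ) sinh (μx)` and `Q = P'/μ`. The coefficients satisfy `a₃ = a₁ - P`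
and `a₄ = a₂ - a₀ + Q`, so the integral is divisible by `p_x² + p_y²` up to `P` and `Q`:
`F = (p_x² + p_y²) (c (a₀ p_x² + (a₂ - a₀) p_y²) + s a₁ p_x p_y) + c Q p_y⁴ - s P p_x p_y³`,
with `c = C_e cos (μy + φ₀)` and `s = C_e sin (μy + φ₀)`.
Because `P' = μ Q` and `Q' = μ P`, the bracket `{F, H}` is itself divisible by `p_x² + p_y²`, and
the vanishing of its six coefficients reduces to four conditions. Three are identities in `h`, and
the fourth, the coefficient of `s p_y⁵`, is the differential equation for `h`.
-/

section ConformalBracket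

/-- The geodesic Hamiltonian of the conformally flat metric `u(x)⁻² (dx² + dy²)`. -/
noncomputable def conformalHamiltonian (u : ℝ → ℝ) (x _y px py : ℝ) : ℝ :=
  (1 / 2) * u x ^ 2 * (px ^ 2 + py ^ 2)

/-- The ansatz for the integral: a quartic form in the momenta that splits off the factor
`px² + py²` up to the terms in `P` and `Q`. The functions `c` and `s` depend on `y`, all
other coefficients on `x`; the coefficients of `px⁴` and `px² py²` are `c a₀` and `c a₂`, that of
`px³ py` is `s a₁`. -/
def quarticForm (c s a₀ a₁ a₂ P Q : ℝ → ℝ) (x y px py : ℝ) : ℝ :=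
  c y * ((px ^ 2 + py ^ 2) * (a₀ x * px ^ 2 + (a₂ x - a₀ x) * py ^ 2) + Q x * py ^ 4) +
    s y * ((px ^ 2 + py ^ 2) * (a₁ x * px * py) - P x * px * py ^ 3)

theorem pb_conformalHamiltonian (F : ℝ → ℝ → ℝ → ℝ → ℝ) {u : ℝ → ℝ} {x : ℝ}
    (hu : DifferentiableAt ℝ u x) (y px py : ℝ) :
    pb F (conformalHamiltonian u) x y px py =
      u x * ((px ^ 2 + py ^ 2) * deriv u x * deriv (fun t => F x y t py) px -
        u x * (px * deriv (fun t => F t y px py) x + py * deriv (fun t => F x t px py) y)) := by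
  have hHx : HasDerivAt (fun t => conformalHamiltonian u t y px py)
      (u x * deriv u x * (px ^ 2 + py ^ 2)) x := by
    refine HasDerivAt.congr_deriv
      (((hu.hasDerivAt.fun_pow 2).const_mul (1 / 2)).mul_const (px ^ 2 + py ^ 2)) ?_
    ring
  have hHy : HasDerivAt (fun t => conformalHamiltonian u x t px py) 0 y := hasDerivAt_const y _
  have hHpx : HasDerivAt (fun t => conformalHamiltonian u x y t py) (u x ^ 2 * px) px := by
    refine HasDerivAt.congr_deriv
      (((hasDerivAt_pow 2 px).add_const (py ^ 2)).const_mul ((1 / 2) * u x ^ 2)) ?_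
    ring
  have hHpy : HasDerivAt (fun t => conformalHamiltonian u x y px t) (u x ^ 2 * py) py := by
    refine HasDerivAt.congr_deriv
      (((hasDerivAt_pow 2 py).const_add (px ^ 2)).const_mul ((1 / 2) * u x ^ 2)) ?_
    ring
  rw [pb, hHx.deriv, hHy.deriv, hHpx.deriv, hHpy.deriv]
  ring

variable {c s a₀ a₁ a₂ P Q : ℝ → ℝ} {μ x y : ℝ}

theorem hasDerivAt_quarticForm_x {P' Q' : ℝ} (h₀ : DifferentiableAt ℝ a₀ x)
    (h₁ : DifferentiableAt ℝ a₁ x) (h₂ : DifferentiableAt ℝ a₂ x) (hP : HasDerivAt P P' x)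
    (hQ : HasDerivAt Q Q' x) (px py : ℝ) :
    HasDerivAt (fun t => quarticForm c s a₀ a₁ a₂ P Q t y px py)
      (c y * ((px ^ 2 + py ^ 2) * (deriv a₀ x * px ^ 2 + (deriv a₂ x - deriv a₀ x) * py ^ 2) +
          Q' * py ^ 4) +
        s y * ((px ^ 2 + py ^ 2) * (deriv a₁ x * px * py) - P' * px * py ^ 3)) x :=
  have hcos := (((h₀.hasDerivAt.mul_const (px ^ 2)).fun_add
    ((h₂.hasDerivAt.fun_sub h₀.hasDerivAt).mul_const (py ^ 2))).const_mul
      (px ^ 2 + py ^ 2)).fun_add (hQ.mul_const (py ^ 4))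
  have hsin := (((h₁.hasDerivAt.mul_const px).mul_const py).const_mul
    (px ^ 2 + py ^ 2)).fun_sub ((hP.mul_const px).mul_const (py ^ 3))
  (hcos.const_mul (c y)).fun_add (hsin.const_mul (s y))

theorem hasDerivAt_quarticForm_y {c' s' : ℝ} (hc : HasDerivAt c c' y) (hs : HasDerivAt s s' y)
    (px py : ℝ) :
    HasDerivAt (fun t => quarticForm c s a₀ a₁ a₂ P Q x t px py)
      (c' * ((px ^ 2 + py ^ 2) * (a₀ x * px ^ 2 + (a₂ x - a₀ x) * py ^ 2) + Q x * py ^ 4) +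
        s' * ((px ^ 2 + py ^ 2) * (a₁ x * px * py) - P x * px * py ^ 3)) y :=
  (hc.mul_const _).fun_add (hs.mul_const _)

theorem hasDerivAt_quarticForm_px (c s a₀ a₁ a₂ P Q : ℝ → ℝ) (x y px py : ℝ) :
    HasDerivAt (fun t => quarticForm c s a₀ a₁ a₂ P Q x y t py)
      (c y * (4 * a₀ x * px ^ 3 + 2 * a₂ x * px * py ^ 2) +
        s y * (3 * a₁ x * px ^ 2 * py + (a₁ x - P x) * py ^ 3)) px := by
  have hsq : HasDerivAt (fun t : ℝ => t ^ 2) (2 * px) px := by simpa using hasDerivAt_pow 2 px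
  have hlin (k : ℝ) : HasDerivAt (fun t : ℝ => k * t) k px := hasDerivAt_const_mul k
  have hnorm := hsq.add_const (py ^ 2)
  have hcos := (hnorm.fun_mul ((hsq.const_mul (a₀ x)).add_const
    ((a₂ x - a₀ x) * py ^ 2))).add_const (Q x * py ^ 4)
  have hsin := (hnorm.fun_mul ((hlin (a₁ x)).mul_const py)).fun_sub
    ((hlin (P x)).mul_const (py ^ 3))
  refine HasDerivAt.congr_deriv ((hcos.const_mul (c y)).fun_add (hsin.const_mul (s y))) ?_
  ring

theorem pb_quarticForm {u : ℝ → ℝ} (hu : DifferentiableAt ℝ u x)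
    (hc : HasDerivAt c (-(μ * s y)) y) (hs : HasDerivAt s (μ * c y) y)
    (h₀ : DifferentiableAt ℝ a₀ x) (h₁ : DifferentiableAt ℝ a₁ x) (h₂ : DifferentiableAt ℝ a₂ x)
    (hP : HasDerivAt P (μ * Q x) x) (hQ : HasDerivAt Q (μ * P x) x) (px py : ℝ) :
    pb (quarticForm c s a₀ a₁ a₂ P Q) (conformalHamiltonian u) x y px py =
      u x * (px ^ 2 + py ^ 2) *
        (c y * px *
            ((4 * a₀ x * deriv u x - u x * deriv a₀ x) * (px ^ 2 - py ^ 2) +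
              (4 * a₀ x * deriv u x + 2 * a₂ x * deriv u x - u x * deriv a₂ x - μ * u x * a₁ x) *
                py ^ 2) +
          s y * py *
            ((3 * a₁ x * deriv u x - u x * deriv a₁ x + μ * u x * a₀ x) * px ^ 2 +
              ((a₁ x - P x) * deriv u x + μ * u x * (a₂ x - a₀ x + Q x)) * py ^ 2)) := by
  rw [pb_conformalHamiltonian _ hu, (hasDerivAt_quarticForm_x h₀ h₁ h₂ hP hQ px py).deriv,
    (hasDerivAt_quarticForm_y hc hs px py).deriv, (hasDerivAt_quarticForm_px ..).deriv]
  ring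

end ConformalBracket

section HyperbolicCoefficients

theorem hasDerivAt_cosh_add_sinh (μ a b x : ℝ) :
    HasDerivAt (fun t => a * Real.cosh (μ * t) + b * Real.sinh (μ * t))
      (μ * (a * Real.sinh (μ * x) + b * Real.cosh (μ * x))) x := by
  have hlin : HasDerivAt (fun t => μ * t) μ x := hasDerivAt_const_mul μ
  refine HasDerivAt.congr_deriv ((hlin.cosh.const_mul a).fun_add (hlin.sinh.const_mul b)) ?_
  ring

theorem hasDerivAt_sinh_add_cosh (μ a b x : ℝ) :
    HasDerivAt (fun t => a * Real.sinh (μ * t) + b * Real.cosh (μ * t))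
      (μ * (a * Real.cosh (μ * x) + b * Real.sinh (μ * x))) x := by
  simpa only [add_comm] using hasDerivAt_cosh_add_sinh μ b a x

theorem hasDerivAt_mul_cos (μ C φ y : ℝ) :
    HasDerivAt (fun t => C * Real.cos (μ * t + φ)) (-(μ * (C * Real.sin (μ * y + φ)))) y := by
  have hlin : HasDerivAt (fun t => μ * t + φ) μ y := (hasDerivAt_const_mul μ).add_const φ
  refine HasDerivAt.congr_deriv (hlin.cos.const_mul C) ?_
  ring

theorem hasDerivAt_mul_sin (μ C φ y : ℝ) :
    HasDerivAt (fun t => C * Real.sin (μ * t + φ)) (μ * (C * Real.cos (μ * y + φ))) y := by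
  have hlin : HasDerivAt (fun t => μ * t + φ) μ y := (hasDerivAt_const_mul μ).add_const φ
  refine HasDerivAt.congr_deriv (hlin.sin.const_mul C) ?_
  ring

theorem hypA3_eq_hypA1_sub (μ A0 A1 A3 A4 : ℝ) (h : ℝ → ℝ) (x : ℝ) :
    hypA3 μ A0 A1 A3 A4 h x =
      hypA1 A0 A1 h x - (A3 * Real.cosh (μ * x) + A4 / μ * Real.sinh (μ * x)) :=
  rfl

theorem hypA4_eq_hypA2_sub_hypA0_add (μ A0 A1 A2 A3 A4 : ℝ) (h : ℝ → ℝ) (x : ℝ) :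
    hypA4 μ A0 A1 A2 A3 A4 h x =
      hypA2 μ A0 A1 A2 h x - hypA0 μ A0 h x +
        (A3 * Real.sinh (μ * x) + A4 / μ * Real.cosh (μ * x)) := by
  rw [hypA4, hypA2, hypA0]
  ring

variable {μ : ℝ} {h : ℝ → ℝ} {x : ℝ}

theorem hasDerivAt_hypA0 (μ A0 : ℝ) (hh' : DifferentiableAt ℝ (deriv h) x) :
    HasDerivAt (hypA0 μ A0 h) (-(4 * A0 / μ) * deriv h x ^ 3 * deriv (deriv h) x) x := by
  refine HasDerivAt.congr_deriv ((hh'.hasDerivAt.fun_pow 4).const_mul (-(A0 / μ))) ?_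
  ring

theorem hasDerivAt_hypA1 (A0 A1 : ℝ) (hh : DifferentiableAt ℝ h x)
    (hh' : DifferentiableAt ℝ (deriv h) x) :
    HasDerivAt (hypA1 A0 A1 h)
      (3 * (A1 - A0 * h x) * deriv h x ^ 2 * deriv (deriv h) x - A0 * deriv h x ^ 4) x := by
  refine HasDerivAt.congr_deriv
    (((hh.hasDerivAt.const_mul A0).const_sub A1).fun_mul (hh'.hasDerivAt.fun_pow 3)) ?_
  ring

theorem hasDerivAt_hypA2 (μ A0 A1 A2 : ℝ) (hh : DifferentiableAt ℝ h x)
    (hh' : DifferentiableAt ℝ (deriv h) x) :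
    HasDerivAt (hypA2 μ A0 A1 A2 h)
      ((μ * (A0 * h x - A1) * deriv h x ^ 3 - 4 * A0 / μ * deriv h x ^ 3 * deriv (deriv h) x) +
        2 * ((1 / 2) * μ * A0 * h x ^ 2 - 2 * A0 / μ * deriv h x ^ 2 - μ * A1 * h x - A2 / μ) *
          deriv h x * deriv (deriv h) x) x := by
  have hsq := hh'.hasDerivAt.fun_pow 2
  have hfactor := ((((hh.hasDerivAt.fun_pow 2).const_mul ((1 / 2) * μ * A0)).fun_sub
    (hsq.const_mul (2 * A0 / μ))).fun_sub (hh.hasDerivAt.const_mul (μ * A1))).sub_const (A2 / μ)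
  refine HasDerivAt.congr_deriv (hfactor.fun_mul hsq) ?_
  ring

theorem hypA0_killing_eq (μ A0 : ℝ) (hh' : DifferentiableAt ℝ (deriv h) x) :
    4 * hypA0 μ A0 h x * deriv (deriv h) x - deriv h x * deriv (hypA0 μ A0 h) x = 0 := by
  rw [(hasDerivAt_hypA0 μ A0 hh').deriv, hypA0]
  ring

theorem hypA1_killing_eq (hμ : μ ≠ 0) (A0 A1 : ℝ) (hh : DifferentiableAt ℝ h x)
    (hh' : DifferentiableAt ℝ (deriv h) x) :
    3 * hypA1 A0 A1 h x * deriv (deriv h) x - deriv h x * deriv (hypA1 A0 A1 h) x +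
      μ * deriv h x * hypA0 μ A0 h x = 0 := by
  rw [(hasDerivAt_hypA1 A0 A1 hh hh').deriv, hypA0, hypA1]
  field

theorem hypA2_killing_eq (μ A0 A1 A2 : ℝ) (hh : DifferentiableAt ℝ h x)
    (hh' : DifferentiableAt ℝ (deriv h) x) :
    4 * hypA0 μ A0 h x * deriv (deriv h) x + 2 * hypA2 μ A0 A1 A2 h x * deriv (deriv h) x -
      deriv h x * deriv (hypA2 μ A0 A1 A2 h) x - μ * deriv h x * hypA1 A0 A1 h x = 0 := by
  rw [(hasDerivAt_hypA2 μ A0 A1 A2 hh hh').deriv, hypA0, hypA1, hypA2]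
  ring

theorem hypA3_hypA4_killing_eq_iff (hμ : μ ≠ 0) (A0 A1 A2 A3 A4 : ℝ) (h : ℝ → ℝ) (x : ℝ) :
    hypA3 μ A0 A1 A3 A4 h x * deriv (deriv h) x +
        μ * deriv h x * hypA4 μ A0 A1 A2 A3 A4 h x = 0 ↔
      ((A0 * h x - A1) * deriv h x ^ 3 + A3 * Real.cosh (μ * x) + A4 / μ * Real.sinh (μ * x)) *
          deriv (deriv h) x + A0 * deriv h x ^ 5 +
        (-(μ ^ 2 / 2) * A0 * h x ^ 2 + μ ^ 2 * A1 * h x + A2) * deriv h x ^ 3 -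
        μ * (A3 * Real.sinh (μ * x) + A4 / μ * Real.cosh (μ * x)) * deriv h x = 0 := by
  rw [← neg_eq_zero, hypA3, hypA4]
  refine Eq.congr_left ?_
  field

theorem hypQuartic_eq_quarticForm (μ A0 A1 A2 A3 A4 Ce φ0 : ℝ) (h : ℝ → ℝ) :
    (fun x y px py =>
        Ce * Real.cos (μ * y + φ0) *
            (hypA0 μ A0 h x * px ^ 4 + hypA2 μ A0 A1 A2 h x * px ^ 2 * py ^ 2 +
              hypA4 μ A0 A1 A2 A3 A4 h x * py ^ 4) +
          Ce * Real.sin (μ * y + φ0) *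
            (hypA1 A0 A1 h x * px ^ 3 * py + hypA3 μ A0 A1 A3 A4 h x * px * py ^ 3)) =
      quarticForm (fun y => Ce * Real.cos (μ * y + φ0)) (fun y => Ce * Real.sin (μ * y + φ0))
        (hypA0 μ A0 h) (hypA1 A0 A1 h) (hypA2 μ A0 A1 A2 h)
        (fun x => A3 * Real.cosh (μ * x) + A4 / μ * Real.sinh (μ * x))
        (fun x => A3 * Real.sinh (μ * x) + A4 / μ * Real.cosh (μ * x)) := by
  funext x y px py
  rw [quarticForm, hypA3_eq_hypA1_sub, hypA4_eq_hypA2_sub_hypA0_add]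
  ring

end HyperbolicCoefficients

theorem stmt_10_general (μ A0 A1 A2 A3 A4 : ℝ) (hμ : μ ≠ 0) (h : ℝ → ℝ) (x : ℝ)
    (hh : ContDiffAt ℝ 2 h x)
    (hode :
      ((A0 * h x - A1) * deriv h x ^ 3 + A3 * Real.cosh (μ * x) + A4 / μ * Real.sinh (μ * x)) *
          deriv (deriv h) x + A0 * deriv h x ^ 5 +
        (-(μ ^ 2 / 2) * A0 * h x ^ 2 + μ ^ 2 * A1 * h x + A2) * deriv h x ^ 3 -
        μ * (A3 * Real.sinh (μ * x) + A4 / μ * Real.cosh (μ * x)) * deriv h x = 0)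
    (Ce φ0 y px py : ℝ) :
    pb (fun x y px py =>
        Ce * Real.cos (μ * y + φ0) *
            (hypA0 μ A0 h x * px ^ 4 + hypA2 μ A0 A1 A2 h x * px ^ 2 * py ^ 2 +
              hypA4 μ A0 A1 A2 A3 A4 h x * py ^ 4) +
          Ce * Real.sin (μ * y + φ0) *
            (hypA1 A0 A1 h x * px ^ 3 * py + hypA3 μ A0 A1 A3 A4 h x * px * py ^ 3))
      (fun x _y px py => (1 / 2) * deriv h x ^ 2 * (px ^ 2 + py ^ 2)) x y px py = 0 := by
  have hh₁ : DifferentiableAt ℝ h x := hh.differentiableAt two_ne_zero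
  have hh₂ : DifferentiableAt ℝ (deriv h) x :=
    (hh.derivWithin (m := 1) (by norm_num)).differentiableAt one_ne_zero
  have hlast := (hypA3_hypA4_killing_eq_iff hμ A0 A1 A2 A3 A4 h x).2 hode
  rw [hypA3_eq_hypA1_sub, hypA4_eq_hypA2_sub_hypA0_add] at hlast
  rw [hypQuartic_eq_quarticForm]
  refine (pb_quarticForm hh₂ (hasDerivAt_mul_cos μ Ce φ0 y) (hasDerivAt_mul_sin μ Ce φ0 y)
    (hasDerivAt_hypA0 μ A0 hh₂).differentiableAt (hasDerivAt_hypA1 A0 A1 hh₁ hh₂).differentiableAt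
    (hasDerivAt_hypA2 μ A0 A1 A2 hh₁ hh₂).differentiableAt
    (hasDerivAt_cosh_add_sinh μ A3 (A4 / μ) x) (hasDerivAt_sinh_add_cosh μ A3 (A4 / μ) x)
    px py).trans ?_
  rw [hypA0_killing_eq μ A0 hh₂, hypA1_killing_eq hμ A0 A1 hh₁ hh₂,
    hypA2_killing_eq μ A0 A1 A2 hh₁ hh₂, hlast]
  ring

theorem stmt_10 (μ A0 A1 A2 A3 A4 : ℝ) (hμ : μ ≠ 0) (h : ℝ → ℝ)
    (hh : ContDiff ℝ (⊤ : ℕ∞) h) (hhx : ∀ x, deriv h x ≠ 0)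
    (hode : ∀ x : ℝ,
      ((A0 * h x - A1) * (deriv h x)^3
          + A3 * Real.cosh (μ * x) + A4 / μ * Real.sinh (μ * x)) * deriv (deriv h) x
        + A0 * (deriv h x)^5
        + (-(μ^2 / 2) * A0 * (h x)^2 + μ^2 * A1 * h x + A2) * (deriv h x)^3
        - μ * (A3 * Real.sinh (μ * x) + A4 / μ * Real.cosh (μ * x)) * deriv h x = 0) :
    ∀ Ce φ0 : ℝ, ∀ x y px py : ℝ,
      pb (fun x y px py =>
            Ce * Real.cos (μ * y + φ0) *
              (hypA0 μ A0 h x * px^4 + hypA2 μ A0 A1 A2 h x * px^2 * py^2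
                + hypA4 μ A0 A1 A2 A3 A4 h x * py^4)
            + Ce * Real.sin (μ * y + φ0) *
              (hypA1 A0 A1 h x * px^3 * py + hypA3 μ A0 A1 A3 A4 h x * px * py^3))
         (fun x _y px py => (1/2) * (deriv h x)^2 * (px^2 + py^2))
         x y px py = 0 := by
  intro Ce φ0 x y px py
  exact stmt_10_general μ A0 A1 A2 A3 A4 hμ h x (contDiff_infty.1 hh 2).contDiffAt (hode x)
    Ce φ0 y px py
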